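/- arXiv:1704.00651 — 3 statements merged into one kernel-verified Lean document; each statement's English description precedes it below -/
import Mathlib

section
/- The fraction of admissible frozen-bit patterns vanishes as the block size grows: lim_{t→∞} P_{2^t} / 2^{2^t} = 0, where the limit is taken over natural numbers t. -/
/-! A nonempty member `S` of `UR (2 ^ (t + 1))` contains the top element `2 ^ (t + 1) - 1`, so
contiguity makes it an up-set for binary domination. In particular `2 * i ∈ S` forces
`2 * i + 1 ∈ S` (`succ_mem_of_mem_UR`), so on each of the `2 ^ t` pairs `{2 * i, 2 * i + 1}`
partitioning `{0, ..., 2 ^ (t + 1) - 1}` only three of the four membership patterns can occur. Hence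
`Pcount (2 ^ (t + 1)) ≤ 3 ^ (2 ^ t)` (`Pcount_le`), and the ratio at `t + 1` is at most
`(3 / 4) ^ (2 ^ t)`, which tends to zero. -/

/-- `i` binary-dominates `j`: every binary digit of `j` is at most that of `i`. -/
def Dom (i j : ℕ) : Prop := ∀ k, Nat.testBit j k = true → Nat.testBit i k = true

/-- A finite set of naturals is domination contiguous. -/
def DomContiguous (S : Finset ℕ) : Prop :=
  ∀ h ∈ S, ∀ j ∈ S, ∀ i : ℕ, Dom h i → Dom i j → i ∈ S

open scoped Classical in
/-- `UR R`: the family of subsets `S ⊆ {0,...,R−1}` that are domination contiguous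
and satisfy: if `S` is nonempty then `R−1 ∈ S`. -/
noncomputable def UR (R : ℕ) : Finset (Finset ℕ) :=
  (Finset.range R).powerset.filter
    (fun S => DomContiguous S ∧ (S.Nonempty → R - 1 ∈ S))

/-- `Pcount R` is the number of admissible frozen-bit patterns on a block of size `R`. -/
noncomputable def Pcount (R : ℕ) : ℕ := (UR R).card

lemma succ_mem_of_mem_UR {t : ℕ} {S : Finset ℕ} (hS : S ∈ UR (2 ^ (t + 1))) {i : ℕ}
    (hi : 2 * i ∈ S) : 2 * i + 1 ∈ S := by
  simp only [UR, Finset.mem_filter, Finset.mem_powerset] at hS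
  obtain ⟨hsub, hcont, htop⟩ := hS
  have hlt : 2 * i < 2 ^ (t + 1) := Finset.mem_range.mp (hsub hi)
  have hlt' : 2 * i + 1 < 2 ^ (t + 1) := by
    rw [pow_succ] at hlt ⊢
    omega
  refine hcont _ (htop ⟨_, hi⟩) _ hi _ ?_ ?_
  · intro k hk
    rw [Nat.testBit_two_pow_sub_one, decide_eq_true_eq]
    by_contra hge
    rw [Nat.testBit_lt_two_pow (hlt'.trans_le
      (Nat.pow_le_pow_right (by norm_num) (not_lt.mp hge)))] at hk
    exact Bool.false_ne_true hk
  · intro k hk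
    cases k with
    | zero => simp at hk
    | succ k =>
      rw [Nat.testBit_succ] at hk ⊢
      have h1 : 2 * i / 2 = i := by omega
      have h2 : (2 * i + 1) / 2 = i := by omega
      rw [h1] at hk
      rw [h2]
      exact hk

open scoped Classical in
/-- The membership pattern of `S` on each pair `{2 * i, 2 * i + 1}`: `2` if `2 * i ∈ S`, `1` if only
`2 * i + 1 ∈ S`, and `0` if neither. It encodes `S` faithfully when `2 * i ∈ S` implies
`2 * i + 1 ∈ S`. -/
noncomputable def pairPattern (n : ℕ) (S : Finset ℕ) (i : Fin n) : Fin 3 :=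
  if 2 * (i : ℕ) ∈ S then 2 else if 2 * (i : ℕ) + 1 ∈ S then 1 else 0

lemma pairPattern_eq_two_iff {n : ℕ} {S : Finset ℕ} {i : Fin n} :
    pairPattern n S i = 2 ↔ 2 * (i : ℕ) ∈ S := by
  unfold pairPattern
  split_ifs <;> simp_all

lemma pairPattern_ne_zero_iff {t : ℕ} {S : Finset ℕ} (hS : S ∈ UR (2 ^ (t + 1)))
    {i : Fin (2 ^ t)} : pairPattern (2 ^ t) S i ≠ 0 ↔ 2 * (i : ℕ) + 1 ∈ S := by
  have h := succ_mem_of_mem_UR hS (i := i)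
  unfold pairPattern
  split_ifs <;> simp_all

lemma subset_of_pairPattern_eq {t : ℕ} {S T : Finset ℕ} (hS : S ∈ UR (2 ^ (t + 1)))
    (hT : T ∈ UR (2 ^ (t + 1))) (h : pairPattern (2 ^ t) S = pairPattern (2 ^ t) T) : S ⊆ T := by
  intro m hm
  have hlt : m < 2 ^ (t + 1) := by
    have hS' := hS
    simp only [UR, Finset.mem_filter, Finset.mem_powerset] at hS'
    exact Finset.mem_range.mp (hS'.1 hm)
  rw [pow_succ] at hlt
  rcases Nat.even_or_odd' m with ⟨i, rfl | rfl⟩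
  · have hi : i < 2 ^ t := by omega
    have key := pairPattern_eq_two_iff (S := S) (i := ⟨i, hi⟩)
    rw [h] at key
    exact pairPattern_eq_two_iff.mp (key.mpr hm)
  · have hi : i < 2 ^ t := by omega
    have key := pairPattern_ne_zero_iff hS (i := ⟨i, hi⟩)
    rw [h] at key
    exact (pairPattern_ne_zero_iff hT).mp (key.mpr hm)

lemma Pcount_le (t : ℕ) : Pcount (2 ^ (t + 1)) ≤ 3 ^ (2 ^ t) := by
  have h : (UR (2 ^ (t + 1))).card ≤ (Finset.univ : Finset (Fin (2 ^ t) → Fin 3)).card := by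
    refine Finset.card_le_card_of_injOn (pairPattern (2 ^ t)) (fun _ _ => Finset.mem_univ _) ?_
    intro S hS T hT hST
    exact (subset_of_pairPattern_eq hS hT hST).antisymm (subset_of_pairPattern_eq hT hS hST.symm)
  simpa [Pcount] using h

theorem tendsto_Pcount_ratio_zero :
    Filter.Tendsto (fun t : ℕ => (Pcount (2 ^ t) : ℝ) / 2 ^ (2 ^ t))
      Filter.atTop (nhds 0) := by
  rw [← Filter.tendsto_add_atTop_iff_nat 1]
  have hlim : Filter.Tendsto (fun t : ℕ => (3 / 4 : ℝ) ^ (2 ^ t)) Filter.atTop (nhds 0) :=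
    (tendsto_pow_atTop_nhds_zero_of_lt_one (by norm_num) (by norm_num)).comp
      (tendsto_pow_atTop_atTop_of_one_lt (by norm_num : 1 < 2))
  refine squeeze_zero (fun t => by positivity) (fun t => ?_) hlim
  have h4 : (2 : ℝ) ^ (2 ^ (t + 1)) = 4 ^ (2 ^ t) := by
    rw [pow_succ, mul_comm, pow_mul]
    norm_num
  rw [h4, div_pow]
  gcongr
  exact_mod_cast Pcount_le t
end

section
/- For every natural number t ≥ 1 and R = 2^t, the count of admissible patterns satisfies the strict inequality P_R < (P_{R/2})². -/
/-- On a block of size `2 ^ n`, the admissible patterns are the up-sets for binary domination. -/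
lemma mem_UR_iff (n : ℕ) (S : Finset ℕ) :
    S ∈ UR (2 ^ n) ↔
      S ⊆ Finset.range (2 ^ n) ∧ ∀ j ∈ S, ∀ i < 2 ^ n, Dom i j → i ∈ S := by
  -- `2 ^ n - 1` has all of its first `n` bits set, so it is the top element.
  have top : ∀ i < 2 ^ n, Dom (2 ^ n - 1) i := by
    intro i hi k hk
    rw [Nat.testBit_two_pow_sub_one, decide_eq_true_eq]
    by_contra hkn
    have : i < 2 ^ k := hi.trans_le (Nat.pow_le_pow_right (by norm_num) (by omega))
    rw [Nat.testBit_lt_two_pow this] at hk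
    exact absurd hk (by simp)
  have pos : 0 < 2 ^ n := by positivity
  simp only [UR, Finset.mem_filter, Finset.mem_powerset]
  refine and_congr_right fun hS => ⟨fun h j hj i hi hij => ?_, fun h => ⟨?_, ?_⟩⟩
  · exact h.1 _ (h.2 ⟨j, hj⟩) j hj i (top i hi) hij
  · intro m hm j hj i hmi hij
    refine h j hj i ?_ hij
    have hle : i ≤ m := Nat.le_of_testBit hmi
    exact hle.trans_lt (Finset.mem_range.1 (hS hm))
  · rintro ⟨j, hj⟩
    exact h j hj _ (by omega) (top j (Finset.mem_range.1 (hS hj)))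

/-- The elements of `S` below `2 ^ n`, i.e. with leading bit `0`. -/
def lowHalf (n : ℕ) (S : Finset ℕ) : Finset ℕ := {i ∈ Finset.range (2 ^ n) | i ∈ S}

/-- The elements of `S` in `[2 ^ n, 2 ^ (n + 1))`, i.e. with leading bit `1`, shifted down by
`2 ^ n`. -/
def highHalf (n : ℕ) (S : Finset ℕ) : Finset ℕ := {i ∈ Finset.range (2 ^ n) | 2 ^ n + i ∈ S}

/-- Domination is preserved when the same new leading bit is set in both numbers. -/
lemma Dom.two_pow_add {n i j : ℕ} (hi : i < 2 ^ n) (hj : j < 2 ^ n) (h : Dom i j) :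
    Dom (2 ^ n + i) (2 ^ n + j) := by
  intro k
  have e : ∀ m < 2 ^ n, 2 ^ n + m = 2 ^ n ||| m := fun m hm => by
    simpa using Nat.two_pow_add_eq_or_of_lt hm 1
  rw [e i hi, e j hj, Nat.testBit_or, Nat.testBit_or, Bool.or_eq_true, Bool.or_eq_true]
  exact Or.imp_right (h k)

lemma halves_mem {n : ℕ} {S : Finset ℕ} (hS : S ∈ UR (2 ^ (n + 1))) :
    (lowHalf n S, highHalf n S) ∈ UR (2 ^ n) ×ˢ UR (2 ^ n) := by
  rw [mem_UR_iff] at hS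
  obtain ⟨-, hup⟩ := hS
  rw [Finset.mem_product, mem_UR_iff, mem_UR_iff]
  refine ⟨⟨Finset.filter_subset _ _, fun j hj i hi hij => ?_⟩,
    ⟨Finset.filter_subset _ _, fun j hj i hi hij => ?_⟩⟩
  · simp only [lowHalf, Finset.mem_filter, Finset.mem_range] at hj ⊢
    exact ⟨hi, hup j hj.2 i (by omega) hij⟩
  · simp only [highHalf, Finset.mem_filter, Finset.mem_range] at hj ⊢
    exact ⟨hi, hup _ hj.2 _ (by omega) (hij.two_pow_add hi hj.1)⟩

lemma halves_injOn (n : ℕ) :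
    Set.InjOn (fun S => (lowHalf n S, highHalf n S)) (UR (2 ^ (n + 1)) : Set (Finset ℕ)) := by
  intro S hS T hT h
  rw [Finset.mem_coe, mem_UR_iff] at hS hT
  obtain ⟨hlow, hhigh⟩ := Prod.mk.inj h
  ext i
  by_cases hi : i < 2 ^ n
  · simpa [lowHalf, hi] using Finset.ext_iff.1 hlow i
  by_cases hi' : i < 2 ^ (n + 1)
  · have h1 : i - 2 ^ n < 2 ^ n := by omega
    have h2 : 2 ^ n + (i - 2 ^ n) = i := by omega
    simpa [highHalf, h1, h2] using Finset.ext_iff.1 hhigh (i - 2 ^ n)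
  · exact iff_of_false (fun h => hi' (Finset.mem_range.1 (hS.1 h)))
      (fun h => hi' (Finset.mem_range.1 (hT.1 h)))

theorem Pcount_lt_sq (t : ℕ) (ht : 1 ≤ t) :
    Pcount (2 ^ t) < Pcount (2 ^ (t - 1)) ^ 2 := by
  obtain ⟨n, rfl⟩ : ∃ n, t = n + 1 := ⟨t - 1, by omega⟩
  have pos : 0 < 2 ^ n := by positivity
  rw [Nat.add_sub_cancel, sq, Pcount, Pcount, ← Finset.card_product,
    ← Finset.card_image_of_injOn (halves_injOn n)]
  refine Finset.card_lt_card ((Finset.ssubset_iff_of_subset ?_).2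
    ⟨(Finset.range (2 ^ n), ∅), ?_, ?_⟩)
  · exact Finset.image_subset_iff.2 fun S hS => halves_mem hS
  · rw [Finset.mem_product, mem_UR_iff, mem_UR_iff]
    simpa using fun _ _ i hi _ => hi
  · intro h
    obtain ⟨S, hS, hSe⟩ := Finset.mem_image.1 h
    obtain ⟨hlow, hhigh⟩ := Prod.mk.inj hSe
    have h0 : 0 ∈ S := by
      have : 0 ∈ lowHalf n S := by rw [hlow]; simp
      exact (Finset.mem_filter.1 this).2
    have h1 : 2 ^ n ∈ S :=
      ((mem_UR_iff _ _).1 hS).2 0 h0 _ (by omega) (fun k hk => by simp at hk)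
    have h2 : 0 ∈ highHalf n S := by simp [highHalf, h1]
    rw [hhigh] at h2
    simp at h2
end

section
/- Let t ≥ 1, R = 2^t, and S ∈ U_R. Then the lower half S₀ = S ∩ {0,...,R/2−1} belongs to U_{R/2}, and the shifted upper half S₁ = {s − R/2 : s ∈ S, s ≥ R/2} belongs to U_{R/2}. Moreover, the map S ↦ (S₀, S₁) is injective on U_R, and if S₁ = ∅ then S = ∅ (so S₀ = ∅); in particular the map is not surjective onto U_{R/2} × U_{R/2}. -/
/-- Split a subset of `{0,...,2H−1}` into its lower half and its shifted upper half. -/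
def splitHalves (H : ℕ) (S : Finset ℕ) : Finset ℕ × Finset ℕ :=
  (S.filter (fun x => x < H), (S.filter (fun x => H ≤ x)).image (fun x => x - H))

lemma Dom.le {i j : ℕ} (h : Dom i j) : j ≤ i := by
  apply Nat.le_of_testBit
  intro k hk
  exact h k hk

/-- Setting the bit `2 ^ n` in numbers below `2 ^ n` preserves domination. -/
lemma Dom.add_two_pow {n i j : ℕ} (hi : i < 2 ^ n) (hj : j < 2 ^ n) (h : Dom i j) :
    Dom (i + 2 ^ n) (j + 2 ^ n) := by
  intro k
  rw [add_comm i, add_comm j, ← mul_one (2 ^ n), Nat.two_pow_add_eq_or_of_lt hi,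
    Nat.two_pow_add_eq_or_of_lt hj]
  simp only [Nat.testBit_or, Bool.or_eq_true]
  exact Or.imp_right (h k)

/-- The all-ones number `2 ^ n - 1` dominates everything below `2 ^ n`. -/
lemma dom_two_pow_sub_one {n j : ℕ} (hj : j < 2 ^ n) : Dom (2 ^ n - 1) j := by
  intro k hk
  rw [Nat.testBit_two_pow_sub_one, decide_eq_true_eq]
  by_contra hn
  have : j < 2 ^ k := hj.trans_le (Nat.pow_le_pow_right (by norm_num) (not_lt.mp hn))
  rw [Nat.testBit_lt_two_pow this] at hk
  exact Bool.false_ne_true hk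

lemma mem_UR {R : ℕ} {S : Finset ℕ} :
    S ∈ UR R ↔ (∀ x ∈ S, x < R) ∧ DomContiguous S ∧ (S.Nonempty → R - 1 ∈ S) := by
  simp [UR, Finset.subset_iff]

lemma mem_splitHalves_fst {H x : ℕ} {S : Finset ℕ} :
    x ∈ (splitHalves H S).1 ↔ x ∈ S ∧ x < H := by
  simp [splitHalves]

lemma mem_splitHalves_snd {H x : ℕ} {S : Finset ℕ} :
    x ∈ (splitHalves H S).2 ↔ x + H ∈ S := by
  simp only [splitHalves, Finset.mem_image, Finset.mem_filter]
  constructor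
  · rintro ⟨y, ⟨hy, hHy⟩, rfl⟩
    rwa [Nat.sub_add_cancel hHy]
  · intro hx
    exact ⟨x + H, ⟨hx, by omega⟩, by omega⟩

/-- The halves determine the set, with no assumption on it. -/
lemma splitHalves_injective (H : ℕ) : Function.Injective (splitHalves H) := by
  intro S T hST
  ext x
  rcases lt_or_ge x H with hx | hx
  · have := mem_splitHalves_fst (H := H) (x := x) (S := S)
    rw [hST, mem_splitHalves_fst] at this
    tauto
  · have := mem_splitHalves_snd (H := H) (x := x - H) (S := S)
    rw [hST, mem_splitHalves_snd, Nat.sub_add_cancel hx] at this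
    exact this.symm

lemma splitHalves_fst_mem_UR {n : ℕ} {S : Finset ℕ} (hS : S ∈ UR (2 ^ (n + 1))) :
    (splitHalves (2 ^ n) S).1 ∈ UR (2 ^ n) := by
  obtain ⟨-, hc, htop⟩ := mem_UR.mp hS
  refine mem_UR.mpr ⟨fun x hx => (mem_splitHalves_fst.mp hx).2, ?_, ?_⟩
  · intro h hh j hj i hhi hij
    rw [mem_splitHalves_fst] at *
    exact ⟨hc h hh.1 j hj.1 i hhi hij, hhi.le.trans_lt hh.2⟩
  · rintro ⟨j, hj⟩
    rw [mem_splitHalves_fst] at *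
    have hpos : 0 < 2 ^ n := by positivity
    refine ⟨hc _ (htop ⟨j, hj.1⟩) j hj.1 _ (dom_two_pow_sub_one ?_)
      (dom_two_pow_sub_one hj.2), by omega⟩
    rw [pow_succ]
    omega

lemma two_pow_sub_one_mem_splitHalves_snd {n : ℕ} {S : Finset ℕ} (hS : S ∈ UR (2 ^ (n + 1)))
    (hne : S.Nonempty) : 2 ^ n - 1 ∈ (splitHalves (2 ^ n) S).2 := by
  have hpos : 0 < 2 ^ n := by positivity
  have hsum : 2 ^ n - 1 + 2 ^ n = 2 ^ (n + 1) - 1 := by rw [pow_succ]; omega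
  rw [mem_splitHalves_snd, hsum]
  exact (mem_UR.mp hS).2.2 hne

lemma splitHalves_snd_mem_UR {n : ℕ} {S : Finset ℕ} (hS : S ∈ UR (2 ^ (n + 1))) :
    (splitHalves (2 ^ n) S).2 ∈ UR (2 ^ n) := by
  obtain ⟨hlt, hc, -⟩ := mem_UR.mp hS
  have hlt' : ∀ x ∈ (splitHalves (2 ^ n) S).2, x < 2 ^ n := by
    intro x hx
    have := hlt _ (mem_splitHalves_snd.mp hx)
    rw [pow_succ] at this
    omega
  refine mem_UR.mpr ⟨hlt', ?_, ?_⟩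
  · intro h hh j hj i hhi hij
    have hi : i < 2 ^ n := hhi.le.trans_lt (hlt' h hh)
    exact mem_splitHalves_snd.mpr <| hc _ (mem_splitHalves_snd.mp hh) _
      (mem_splitHalves_snd.mp hj) _ (hhi.add_two_pow (hlt' h hh) hi)
      (hij.add_two_pow hi (hlt' j hj))
  · rintro ⟨j, hj⟩
    exact two_pow_sub_one_mem_splitHalves_snd hS ⟨_, mem_splitHalves_snd.mp hj⟩

lemma eq_empty_of_splitHalves_snd_eq_empty {n : ℕ} {S : Finset ℕ} (hS : S ∈ UR (2 ^ (n + 1)))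
    (h : (splitHalves (2 ^ n) S).2 = ∅) : S = ∅ := by
  by_contra hne
  have := two_pow_sub_one_mem_splitHalves_snd hS (Finset.nonempty_iff_ne_empty.mpr hne)
  simp [h] at this

lemma empty_mem_UR (R : ℕ) : ∅ ∈ UR R :=
  mem_UR.mpr ⟨by simp, by simp [DomContiguous], by simp⟩

lemma singleton_mem_UR {R : ℕ} (hR : 0 < R) : {R - 1} ∈ UR R := by
  refine mem_UR.mpr ⟨by simpa using hR, ?_, by simp⟩
  intro h hh j hj i hhi hij
  rw [Finset.mem_singleton] at *
  subst hh hj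
  exact le_antisymm hhi.le hij.le

theorem splitHalves_mem_injOn_not_surjOn (t : ℕ) (ht : 1 ≤ t) :
    (∀ S ∈ UR (2 ^ t),
        (splitHalves (2 ^ (t - 1)) S).1 ∈ UR (2 ^ (t - 1)) ∧
        (splitHalves (2 ^ (t - 1)) S).2 ∈ UR (2 ^ (t - 1)) ∧
        ((splitHalves (2 ^ (t - 1)) S).2 = ∅ → S = ∅ ∧ (splitHalves (2 ^ (t - 1)) S).1 = ∅)) ∧
    Set.InjOn (splitHalves (2 ^ (t - 1))) ↑(UR (2 ^ t)) ∧
    ¬ ((↑(UR (2 ^ (t - 1))) ×ˢ ↑(UR (2 ^ (t - 1))) : Set (Finset ℕ × Finset ℕ)) ⊆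
        splitHalves (2 ^ (t - 1)) '' ↑(UR (2 ^ t))) := by
  obtain ⟨n, rfl⟩ : ∃ n, t = n + 1 := ⟨t - 1, by omega⟩
  rw [Nat.add_sub_cancel]
  refine ⟨fun S hS => ⟨splitHalves_fst_mem_UR hS, splitHalves_snd_mem_UR hS, fun h => ?_⟩,
    (splitHalves_injective _).injOn, fun hsurj => ?_⟩
  · obtain rfl := eq_empty_of_splitHalves_snd_eq_empty hS h
    exact ⟨rfl, by simp [splitHalves]⟩
  · have hmem : (({2 ^ n - 1}, ∅) : Finset ℕ × Finset ℕ) ∈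
        (↑(UR (2 ^ n)) ×ˢ ↑(UR (2 ^ n)) : Set (Finset ℕ × Finset ℕ)) :=
      ⟨singleton_mem_UR (by positivity), empty_mem_UR _⟩
    obtain ⟨S, hS, hsplit⟩ := hsurj hmem
    obtain rfl := eq_empty_of_splitHalves_snd_eq_empty hS (congrArg Prod.snd hsplit)
    simp [splitHalves] at hsplit
end
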